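/- arXiv:1702.06223 — 5 statements merged into one kernel-verified Lean document; each statement's English description precedes it below -/
import Mathlib

section
/- Let q ∈ ℂ be nonzero and not a root of unity (q^n ≠ 1 for every integer n ≥ 1). Let V be a nonzero finite-dimensional complex vector space and let X, Y : V → V be linear maps satisfying X∘Y − q·(Y∘X) = id_V. Assume the representation is irreducible, i.e. the only ℂ-subspaces U ⊆ V with X(U) ⊆ U and Y(U) ⊆ U are 0 and V. Then dim_ℂ V = 1. -/
/-!
By the Weinstein–Aronszajn identity the commutator `⁅X, Y⁆ = 1 + (q - 1) Y X` has the same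
determinant as `1 + (q - 1) X Y = q ⁅X, Y⁆`. In dimension `n` this reads
`det ⁅X, Y⁆ = q ^ n * det ⁅X, Y⁆`, so `⁅X, Y⁆` is singular as soon as `q ^ n ≠ 1`. Since `⁅X, Y⁆`
commutes with `X` and `Y` up to powers of `q`, its kernel is a subrepresentation, and therefore
everything; for `q = 0`, where one of these relations degenerates, `X Y = 1` already forces
`Y X = 1`. So `X` and `Y` commute, and an irreducible representation of a commutative algebra over
an algebraically closed field is a line.
-/

open Module

theorem linearMap_det_one_add_mul_comm {R M : Type*} [CommRing R] [AddCommGroup M] [Module R M]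
    [Module.Free R M] [Module.Finite R M] (f g : End R M) :
    LinearMap.det (1 + f * g) = LinearMap.det (1 + g * f) := by
  simp only [← LinearMap.det_toMatrix (Free.chooseBasis R M), map_add, LinearMap.toMatrix_one,
    LinearMap.toMatrix_mul]
  exact Matrix.det_one_add_mul_comm _ _

/-- The defining relation `x y - q y x = 1` of the quantized Weyl algebra, imposed on a pair of
elements of an arbitrary algebra. -/
def IsQuantumWeylPair {R A : Type*} [CommRing R] [Ring A] [Algebra R A] (q : R) (x y : A) : Prop :=
  x * y - q • (y * x) = 1

namespace IsQuantumWeylPair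

section Algebra

variable {R A : Type*} [CommRing R] [Ring A] [Algebra R A] {q : R} {x y : A}

theorem mul_eq (h : IsQuantumWeylPair q x y) : x * y = 1 + q • (y * x) :=
  sub_eq_iff_eq_add.mp h

theorem lie_eq (h : IsQuantumWeylPair q x y) : ⁅x, y⁆ = 1 + (q - 1) • (y * x) := by
  rw [Ring.lie_def, h.mul_eq]
  module

theorem smul_lie_eq (h : IsQuantumWeylPair q x y) : q • ⁅x, y⁆ = 1 + (q - 1) • (x * y) := by
  rw [h.lie_eq, h.mul_eq]
  module

theorem mul_lie (h : IsQuantumWeylPair q x y) : x * ⁅x, y⁆ = q • (⁅x, y⁆ * x) := by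
  rw [← smul_mul_assoc, h.smul_lie_eq, h.lie_eq]
  simp only [mul_add, add_mul, mul_one, one_mul, mul_smul_comm, smul_mul_assoc, mul_assoc]

theorem lie_mul (h : IsQuantumWeylPair q x y) : ⁅x, y⁆ * y = q • (y * ⁅x, y⁆) := by
  rw [← mul_smul_comm, h.smul_lie_eq, h.lie_eq]
  simp only [mul_add, add_mul, mul_one, one_mul, mul_smul_comm, smul_mul_assoc, mul_assoc]

end Algebra

section Module

variable {R M : Type*} [CommRing R] [AddCommGroup M] [Module R M] {q : R} {X Y : End R M}

theorem det_lie [Module.Free R M] [Module.Finite R M] (h : IsQuantumWeylPair q X Y) :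
    LinearMap.det ⁅X, Y⁆ = q ^ finrank R M * LinearMap.det ⁅X, Y⁆ :=
  calc LinearMap.det ⁅X, Y⁆ = LinearMap.det (1 + (q - 1) • Y * X) := by
        rw [h.lie_eq, smul_mul_assoc]
    _ = LinearMap.det (q • ⁅X, Y⁆) := by
        rw [linearMap_det_one_add_mul_comm, mul_smul_comm, h.smul_lie_eq]
    _ = q ^ finrank R M * LinearMap.det ⁅X, Y⁆ := LinearMap.det_smul q _

theorem ker_lie_mem_invtSubmodule_right (h : IsQuantumWeylPair q X Y) :
    LinearMap.ker ⁅X, Y⁆ ∈ Y.invtSubmodule := by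
  intro v hv
  have hYv : ⁅X, Y⁆ (Y v) = q • Y (⁅X, Y⁆ v) := LinearMap.congr_fun h.lie_mul v
  rwa [LinearMap.mem_ker.mp hv, map_zero, smul_zero] at hYv

theorem ker_lie_mem_invtSubmodule_left [IsDomain R] [IsTorsionFree R M]
    (h : IsQuantumWeylPair q X Y) (hq : q ≠ 0) :
    LinearMap.ker ⁅X, Y⁆ ∈ X.invtSubmodule := by
  intro v hv
  have hXv : X (⁅X, Y⁆ v) = q • ⁅X, Y⁆ (X v) := LinearMap.congr_fun h.mul_lie v
  rw [LinearMap.mem_ker.mp hv, map_zero] at hXv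
  exact (smul_eq_zero.mp hXv.symm).resolve_left hq

theorem ker_lie_ne_bot [IsDomain R] [Module.Free R M] [Module.Finite R M]
    (h : IsQuantumWeylPair q X Y) (hq : q ^ finrank R M ≠ 1) : LinearMap.ker ⁅X, Y⁆ ≠ ⊥ := by
  refine LinearMap.det_eq_zero_iff_ker_ne_bot.mp ?_
  by_contra hdet
  exact hq ((right_eq_mul₀ hdet).mp h.det_lie)

end Module

theorem commute_of_irreducible {K V : Type*} [Field K] [AddCommGroup V] [Module K V]
    [FiniteDimensional K V] {q : K} {X Y : End K V} (h : IsQuantumWeylPair q X Y)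
    (hq : q ^ finrank K V ≠ 1)
    (hirr : ∀ U ∈ X.invtSubmodule, U ∈ Y.invtSubmodule → U = ⊥ ∨ U = ⊤) : Commute X Y := by
  rcases eq_or_ne q 0 with rfl | hq0
  · have hXY : X * Y = 1 := by simpa using h.mul_eq
    exact hXY.trans (mul_eq_one_symm hXY).symm
  · have hker : LinearMap.ker ⁅X, Y⁆ = ⊤ :=
      (hirr _ (h.ker_lie_mem_invtSubmodule_left hq0)
        h.ker_lie_mem_invtSubmodule_right).resolve_left (h.ker_lie_ne_bot hq)
    exact commute_iff_lie_eq.mpr (LinearMap.ker_eq_top.mp hker)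

end IsQuantumWeylPair

theorem isSimpleModule_adjoin_of_forall_invtSubmodule {R M : Type*} [CommRing R]
    [AddCommGroup M] [Module R M] [Nontrivial M] {S : Set (End R M)}
    (hirr : ∀ U : Submodule R M, (∀ f ∈ S, U ∈ f.invtSubmodule) → U = ⊥ ∨ U = ⊤) :
    IsSimpleModule (Algebra.adjoin R S) M where
  eq_bot_or_eq_top N := by
    have hN : ∀ f ∈ S, N.restrictScalars R ∈ f.invtSubmodule := fun f hf _ hv ↦
      N.smul_mem ⟨f, Algebra.subset_adjoin hf⟩ hv
    simpa using hirr (N.restrictScalars R) hN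

theorem finrank_eq_one_of_pairwise_commute {K V : Type*} [Field K] [IsAlgClosed K]
    [AddCommGroup V] [Module K V] [FiniteDimensional K V] [Nontrivial V] {S : Set (End K V)}
    (hcomm : ∀ f ∈ S, ∀ g ∈ S, f * g = g * f)
    (hirr : ∀ U : Submodule K V, (∀ f ∈ S, U ∈ f.invtSubmodule) → U = ⊥ ∨ U = ⊤) :
    finrank K V = 1 := by
  have := isSimpleModule_adjoin_of_forall_invtSubmodule hirr
  have := Algebra.isMulCommutative_adjoin K hcomm
  exact IsSimpleModule.finrank_eq_one_of_isMulCommutative (Algebra.adjoin K S) V K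

theorem weyl_algebra_irreducible_one_dimensional_general
    {K V : Type*} [Field K] [IsAlgClosed K] [AddCommGroup V] [Module K V] [FiniteDimensional K V]
    {q : K} (hq : q ^ finrank K V ≠ 1) {X Y : V →ₗ[K] V}
    (hrel : X ∘ₗ Y - q • (Y ∘ₗ X) = LinearMap.id)
    (hirr : ∀ U : Submodule K V, (∀ v ∈ U, X v ∈ U) → (∀ v ∈ U, Y v ∈ U) → U = ⊥ ∨ U = ⊤) :
    finrank K V = 1 := by
  have hdim : finrank K V ≠ 0 := fun h0 ↦ hq (by rw [h0, pow_zero])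
  have : Nontrivial V := nontrivial_of_finrank_pos (Nat.pos_of_ne_zero hdim)
  have hXY : Commute X Y := IsQuantumWeylPair.commute_of_irreducible hrel hq hirr
  refine finrank_eq_one_of_pairwise_commute (S := {X, Y}) ?_ fun U hU ↦
    hirr U (hU X (by simp)) (hU Y (by simp))
  rintro f (rfl | rfl) g (rfl | rfl)
  exacts [rfl, hXY, hXY.symm, rfl]

/-- Every finite-dimensional irreducible representation of the quantized Weyl algebra
`k⟨X,Y⟩/(XY − qYX − 1)` over `ℂ`, with `q` not a root of unity, is one-dimensional. -/
theorem weyl_algebra_irreducible_one_dimensional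
    (q : ℂ) (hq0 : q ≠ 0) (hq : ∀ n : ℕ, 1 ≤ n → q ^ n ≠ 1)
    {V : Type*} [AddCommGroup V] [Module ℂ V] [FiniteDimensional ℂ V] [Nontrivial V]
    (X Y : V →ₗ[ℂ] V)
    (hrel : X ∘ₗ Y - q • (Y ∘ₗ X) = LinearMap.id)
    (hirr : ∀ U : Submodule ℂ V, (∀ v ∈ U, X v ∈ U) → (∀ v ∈ U, Y v ∈ U) →
      U = ⊥ ∨ U = ⊤) :
    Module.finrank ℂ V = 1 :=
  weyl_algebra_irreducible_one_dimensional_general (hq _ finrank_pos) hrel hirr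
end

section
/- For all λ, λ' ∈ ℂ the following q²-commutator identity holds in A: (E·K' + λ·K')·(F + λ'·K') − q²·(F + λ'·K')·(E·K' + λ·K') = (q²/(q − q⁻¹))·(1 − K'²) + (1 − q²)·λ·λ'·K'². -/
/-!
The shifted generators are `E * K' + λ • K'` and `F + λ' • K'`. The relations of `U_q(sl₂)` say that
the `q²`-commutators of `E` with `K'` and of `K'` with `F` vanish. Expanding bilinearly, the two
terms linear in `λ`, `λ'` therefore drop out; a twisted Leibniz rule turns the constant term into
`q² • ((E * F - F * E) * K')`, and the term in `λ * λ'` is the `q²`-commutator of `K'` with itself.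
-/

section QCommutator

variable {R A : Type*} [CommRing R] [Ring A] [Algebra R A]

/-- The `c`-commutator `[x, y]_c = x * y - c • (y * x)`, which vanishes exactly when `x` and `y`
`c`-commute. It is bilinear, so relations of the form `x * y = c • (y * x)` can be expanded
termwise. -/
def qCommutator (c : R) (x y : A) : A :=
  x * y - c • (y * x)

theorem qCommutator_eq_zero_iff {c : R} {x y : A} :
    qCommutator c x y = 0 ↔ x * y = c • (y * x) :=
  sub_eq_zero

theorem qCommutator_add_left (c : R) (x₁ x₂ y : A) :
    qCommutator c (x₁ + x₂) y = qCommutator c x₁ y + qCommutator c x₂ y := by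
  simp only [qCommutator, add_mul, mul_add, smul_add, add_sub_add_comm]

theorem qCommutator_add_right (c : R) (x y₁ y₂ : A) :
    qCommutator c x (y₁ + y₂) = qCommutator c x y₁ + qCommutator c x y₂ := by
  simp only [qCommutator, add_mul, mul_add, smul_add, add_sub_add_comm]

theorem qCommutator_smul_left (c r : R) (x y : A) :
    qCommutator c (r • x) y = r • qCommutator c x y := by
  simp only [qCommutator, smul_mul_assoc, mul_smul_comm, smul_sub, smul_comm c r]

theorem qCommutator_smul_right (c r : R) (x y : A) :
    qCommutator c x (r • y) = r • qCommutator c x y := by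
  simp only [qCommutator, smul_mul_assoc, mul_smul_comm, smul_sub, smul_comm c r]

theorem qCommutator_self (c : R) (x : A) : qCommutator c x x = (1 - c) • x ^ 2 := by
  rw [qCommutator, sub_smul, one_smul, sq]

theorem qCommutator_mul_self_left (c : R) (x k : A) :
    qCommutator c (x * k) k = qCommutator c x k * k := by
  simp only [qCommutator, sub_mul, smul_mul_assoc, mul_assoc]

theorem qCommutator_mul_left (c : R) (x k y : A) :
    qCommutator c (x * k) y = x * qCommutator c k y + c • (⁅x, y⁆ * k) := by
  simp only [qCommutator, Ring.lie_def, mul_sub, sub_mul, smul_sub, mul_smul_comm, mul_assoc]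
  abel

theorem qCommutator_units_inv_right (c : R) (x : A) (u : Aˣ) :
    qCommutator c x ↑u⁻¹ = ↑u⁻¹ * qCommutator c ↑u x * ↑u⁻¹ := by
  simp only [qCommutator, mul_sub, sub_mul, mul_smul_comm, smul_mul_assoc, mul_assoc,
    Units.inv_mul_cancel_left, Units.mul_inv, mul_one]

theorem qCommutator_units_inv_right_eq_zero_iff {c : R} {x : A} {u : Aˣ} :
    qCommutator c x ↑u⁻¹ = 0 ↔ qCommutator c ↑u x = 0 := by
  rw [qCommutator_units_inv_right, Units.mul_left_eq_zero, Units.mul_right_eq_zero]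

theorem qCommutator_units_inv_left_eq_zero_iff {c : R} {x : A} {u : Aˣ} :
    qCommutator c ↑u⁻¹ x = 0 ↔ qCommutator c x ↑u = 0 := by
  rw [← qCommutator_units_inv_right_eq_zero_iff, inv_inv]

theorem qCommutator_mul_add_smul_add_smul {c : R} {x y k : A}
    (hxk : qCommutator c x k = 0) (hky : qCommutator c k y = 0) (a b : R) :
    qCommutator c (x * k + a • k) (y + b • k) =
      c • (⁅x, y⁆ * k) + ((1 - c) * a * b) • k ^ 2 := by
  have h_const : qCommutator c (x * k) y = c • (⁅x, y⁆ * k) := by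
    rw [qCommutator_mul_left, hky, mul_zero, zero_add]
  have h_cross : qCommutator c (x * k) k = 0 := by
    rw [qCommutator_mul_self_left, hxk, zero_mul]
  calc qCommutator c (x * k + a • k) (y + b • k)
      = qCommutator c (x * k) y + a • qCommutator c k y
          + (b • qCommutator c (x * k) k + b • a • qCommutator c k k) := by
        simp only [qCommutator_add_left, qCommutator_add_right, qCommutator_smul_left,
          qCommutator_smul_right, smul_add]
    _ = c • (⁅x, y⁆ * k) + b • a • (1 - c) • k ^ 2 := by
        rw [h_const, h_cross, hky, qCommutator_self, smul_zero, smul_zero, add_zero, zero_add]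
    _ = c • (⁅x, y⁆ * k) + ((1 - c) * a * b) • k ^ 2 := by module

/-- With `c = q ^ 2` and `r = (q - q⁻¹)⁻¹` these are the relations of `U_q(sl₂)`; the relation
`K * F = c⁻¹ • (F * K)` is written without inverting `c`. -/
theorem uqsl2_shifted_commutator_general {c r : R} {E F : A} {K : Aˣ}
    (hKE : K * E = c • (E * K)) (hFK : F * K = c • (K * F))
    (hEF : E * F - F * E = r • (K - ↑K⁻¹ : A)) (a b : R) :
    (E * ↑K⁻¹ + a • (↑K⁻¹ : A)) * (F + b • (↑K⁻¹ : A))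
      - c • ((F + b • (↑K⁻¹ : A)) * (E * ↑K⁻¹ + a • (↑K⁻¹ : A)))
      = (c * r) • (1 - (↑K⁻¹ : A) ^ 2) + ((1 - c) * a * b) • (↑K⁻¹ : A) ^ 2 := by
  have hEK : qCommutator c E ↑K⁻¹ = 0 :=
    qCommutator_units_inv_right_eq_zero_iff.mpr (qCommutator_eq_zero_iff.mpr hKE)
  have hKF : qCommutator c ↑K⁻¹ F = 0 :=
    qCommutator_units_inv_left_eq_zero_iff.mpr (qCommutator_eq_zero_iff.mpr hFK)
  have hEFK : ⁅E, F⁆ * ↑K⁻¹ = r • (1 - (↑K⁻¹ : A) ^ 2) := by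
    rw [Ring.lie_def, hEF, smul_mul_assoc, sub_mul, Units.mul_inv, sq]
  rw [← qCommutator, qCommutator_mul_add_smul_add_smul hEK hKF, hEFK, smul_smul]

end QCommutator

/-- The q²-commutator identity for character-shifted generators in `U_q(sl₂)`:
`[E·K' + λ·K', F + λ'·K']_{q²} = (q²/(q−q⁻¹))·(1 − K'²) + (1−q²)·λ·λ'·K'²`. -/
theorem uqsl2_shifted_commutator
    (q : ℂ) (hq0 : q ≠ 0) (hq1 : q ^ 2 ≠ 1)
    {A : Type*} [Ring A] [Algebra ℂ A]
    (E F K K' : A)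
    (hKK' : K * K' = 1) (hK'K : K' * K = 1)
    (hKE : K * E = (q ^ 2) • (E * K))
    (hKF : K * F = (q ^ 2)⁻¹ • (F * K))
    (hEF : E * F - F * E = (q - q⁻¹)⁻¹ • (K - K'))
    (lam lam' : ℂ) :
    (E * K' + lam • K') * (F + lam' • K')
      - (q ^ 2) • ((F + lam' • K') * (E * K' + lam • K'))
      = (q ^ 2 / (q - q⁻¹)) • (1 - K' ^ 2) + ((1 - q ^ 2) * lam * lam') • K' ^ 2 := by
  have hFK : F * K = (q ^ 2) • (K * F) := by rw [hKF, smul_inv_smul₀ (pow_ne_zero 2 hq0)]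
  exact uqsl2_shifted_commutator_general (K := ⟨K, K', hKK', hK'K⟩) hKE hFK hEF lam lam'
end

section
/- Let A be an associative unital ℂ-algebra and Z ⊆ A a generating set (the ℂ-subalgebra generated by Z is all of A). Let X, K ∈ A be such that: (i) for every Y ∈ Z there exists a nonzero constant c ∈ ℂ with X·Y = c·(Y·X); (ii) there is a constant c' ∈ ℂ which is not a root of unity (c'^n ≠ 1 for all integers n ≥ 1) with K·X = c'·(X·K). Let V be a finite-dimensional (over ℂ) simple A-module such that K has an eigenvector with nonzero eigenvalue on V, i.e. there exist 0 ≠ v ∈ V and μ ∈ ℂ, μ ≠ 0, with K·v = μ·v. Then X·v = 0 for every v ∈ V. -/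
/-!
The elements `a` with `X a ∈ A X` form a subalgebra. It contains the generators, so it is all of
`A`, and hence the kernel of `X` on `V` is a submodule. If `X` does not act as zero, it therefore
acts injectively, hence bijectively. Then `K X = c' X K` and `K ≠ 0` on `V` force `c' ≠ 0`, and `X`
maps the `ν`-eigenspace of `K` injectively into the `c' ν`-eigenspace. The finite set of eigenvalues
of `K` thus contains every `c' ^ n * μ`, so `c'` is a root of unity.
-/

theorem exists_semiconjBy_of_mem_adjoin {R A : Type*} [CommSemiring R] [Semiring A] [Algebra R A]
    {Z : Set A} {x a : A} (hx : ∀ y ∈ Z, ∃ b, SemiconjBy x y b)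
    (ha : a ∈ Algebra.adjoin R Z) : ∃ b, SemiconjBy x a b := by
  induction ha using Algebra.adjoin_induction with
  | mem y hy => exact hx y hy
  | algebraMap r => exact ⟨algebraMap R A r, (Algebra.commutes r x).symm⟩
  | add _ _ _ _ iha ihb =>
    obtain ⟨a', ha'⟩ := iha
    obtain ⟨b', hb'⟩ := ihb
    exact ⟨a' + b', ha'.add_right hb'⟩
  | mul _ _ _ _ iha ihb =>
    obtain ⟨a', ha'⟩ := iha
    obtain ⟨b', hb'⟩ := ihb
    exact ⟨a' * b', ha'.mul_right hb'⟩

theorem smul_eq_zero_or_smul_injective_of_semiconjBy {A V : Type*} [Ring A] [AddCommGroup V]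
    [Module A V] [IsSimpleModule A V] {x : A} (hx : ∀ a, ∃ b, SemiconjBy x a b) :
    (∀ v : V, x • v = 0) ∨ Function.Injective (fun v : V ↦ x • v) := by
  let kernel : Submodule A V :=
    { (Module.toAddMonoidEnd A V x).ker with
      smul_mem' := fun a v (hv : x • v = 0) ↦ by
        obtain ⟨b, hb⟩ := hx a
        change x • a • v = 0
        rw [← mul_smul, hb.eq, mul_smul, hv, smul_zero] }
  have mem_kernel (v : V) : v ∈ kernel ↔ x • v = 0 := Iff.rfl
  rcases eq_bot_or_eq_top kernel with hbot | htop
  · refine .inr ((injective_iff_map_eq_zero (Module.toAddMonoidEnd A V x)).mpr fun v hv ↦ ?_)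
    rwa [← Submodule.mem_bot A, ← hbot]
  · exact .inl fun v ↦ (mem_kernel v).mp (htop ▸ Submodule.mem_top)

theorem isOfFinOrder_of_mul_mem_of_finite {M : Type*} [MonoidWithZero M] [IsCancelMulZero M]
    {S : Set M} (hS : S.Finite) {a b : M} (ha : a ≠ 0) (hb : b ≠ 0) (hbS : b ∈ S)
    (hmul : ∀ s ∈ S, a * s ∈ S) : IsOfFinOrder a := by
  have hpow_mem (n : ℕ) : a ^ n * b ∈ S := by
    induction n with
    | zero => simpa using hbS
    | succ n ih => simpa only [pow_succ', mul_assoc] using hmul _ ih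
  obtain ⟨m, n, hmn, heq⟩ := Set.Finite.exists_lt_map_eq_of_forall_mem hpow_mem hS
  have hpow : a ^ m * a ^ (n - m) = a ^ m * 1 := by
    rw [pow_mul_pow_sub a hmn.le, mul_one, mul_right_cancel₀ hb heq]
  exact isOfFinOrder_iff_pow_eq_one.mpr
    ⟨n - m, Nat.sub_pos_of_lt hmn, mul_left_cancel₀ (pow_ne_zero m ha) hpow⟩

section QCommutingEndomorphisms

variable {R V : Type*} [CommRing R] [AddCommGroup V] [Module R V] {f g : Module.End R V} {c μ : R}

theorem hasEigenvalue_mul_of_mul_eq_smul_mul (hf : Function.Injective f) (h : g * f = c • (f * g))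
    (hμ : g.HasEigenvalue μ) : g.HasEigenvalue (c * μ) := by
  obtain ⟨v, hv⟩ := hμ.exists_hasEigenvector
  have hgfv : g (f v) = (c * μ) • f v :=
    calc g (f v) = c • f (g v) := LinearMap.congr_fun h v
      _ = (c * μ) • f v := by rw [hv.apply_eq_smul, map_smul, smul_smul]
  exact Module.End.hasEigenvalue_of_hasEigenvector
    ⟨Module.End.mem_eigenspace_iff.mpr hgfv, (map_ne_zero_iff f hf).mpr hv.2⟩

theorem ne_zero_of_mul_eq_smul_mul (hf : Function.Surjective f) (h : g * f = c • (f * g))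
    (hg : g ≠ 0) : c ≠ 0 := by
  rintro rfl
  refine hg ((LinearMap.cancel_right hf).mp ?_)
  rw [LinearMap.zero_comp, ← Module.End.mul_eq_comp, h, zero_smul]

end QCommutingEndomorphisms

theorem isOfFinOrder_of_mul_eq_smul_mul {F V : Type*} [Field F] [AddCommGroup V] [Module F V]
    [FiniteDimensional F V] {f g : Module.End F V} {c μ : F} (hf : Function.Injective f)
    (h : g * f = c • (f * g)) (hμ : g.HasEigenvalue μ) (hμ₀ : μ ≠ 0) : IsOfFinOrder c := by
  have hg : g ≠ 0 := by
    rintro rfl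
    obtain ⟨v, hv⟩ := hμ.exists_hasEigenvector
    exact smul_ne_zero hμ₀ hv.2 hv.apply_eq_smul.symm
  have hc : c ≠ 0 :=
    ne_zero_of_mul_eq_smul_mul (LinearMap.injective_iff_surjective.mp hf) h hg
  exact isOfFinOrder_of_mul_mem_of_finite g.finite_hasEigenvalue hc hμ₀ hμ
    fun _ hν ↦ hasEigenvalue_mul_of_mul_eq_smul_mul hf h hν

theorem qcommuting_element_acts_trivially_general {F A V : Type*} [Field F] [Ring A] [Algebra F A]
    [AddCommGroup V] [Module F V] [Module A V] [IsScalarTower F A V] [FiniteDimensional F V]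
    [IsSimpleModule A V] {Z : Set A} (hZ : Algebra.adjoin F Z = ⊤) {X K : A}
    (hX : ∀ Y ∈ Z, ∃ Y', SemiconjBy X Y Y') {c μ : F} (hc : ∀ n : ℕ, 1 ≤ n → c ^ n ≠ 1)
    (hK : K * X = c • (X * K)) {v₀ : V} (hv₀ : v₀ ≠ 0) (hμ : μ ≠ 0) (hKv : K • v₀ = μ • v₀)
    (v : V) : X • v = 0 := by
  have hnormal (a : A) : ∃ b, SemiconjBy X a b :=
    exists_semiconjBy_of_mem_adjoin hX (hZ ▸ Algebra.mem_top)
  rcases smul_eq_zero_or_smul_injective_of_semiconjBy (V := V) hnormal with hzero | hinj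
  · exact hzero v
  · let ρ : A →ₐ[F] Module.End F V := Algebra.lsmul F F V
    have hcomm : ρ K * ρ X = c • (ρ X * ρ K) := by
      rw [← map_mul, hK, map_smul, map_mul]
    have heigen : (ρ K).HasEigenvalue μ :=
      Module.End.hasEigenvalue_of_hasEigenvector ⟨Module.End.mem_eigenspace_iff.mpr hKv, hv₀⟩
    obtain ⟨n, hn, hcn⟩ := (isOfFinOrder_of_mul_eq_smul_mul hinj hcomm heigen hμ).exists_pow_eq_one
    exact absurd hcn (hc n hn)

/-- If `X` q-commutes with all generators of `A`, and `K·X = c'·X·K` for `c'` not a root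
of unity, and `K` has an eigenvector with nonzero eigenvalue on a finite-dimensional
simple `A`-module `V`, then `X` acts as zero on `V`. -/
theorem qcommuting_element_acts_trivially
    {A : Type*} [Ring A] [Algebra ℂ A]
    (Z : Set A) (hZ : Algebra.adjoin ℂ Z = ⊤)
    (X K : A)
    (hX : ∀ Y ∈ Z, ∃ c : ℂ, c ≠ 0 ∧ X * Y = c • (Y * X))
    (c' : ℂ) (hc' : ∀ n : ℕ, 1 ≤ n → c' ^ n ≠ 1)
    (hK : K * X = c' • (X * K))
    (V : Type*) [AddCommGroup V] [Module ℂ V] [Module A V]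
    [IsScalarTower ℂ A V] [FiniteDimensional ℂ V] [IsSimpleModule A V]
    (v₀ : V) (hv₀ : v₀ ≠ 0) (μ : ℂ) (hμ : μ ≠ 0) (hKv : K • v₀ = μ • v₀) :
    ∀ v : V, X • v = 0 := by
  exact qcommuting_element_acts_trivially_general hZ (fun Y hY ↦ (hX Y hY).elim fun c hc ↦
    ⟨c • Y, hc.2.trans (smul_mul_assoc c Y X).symm⟩) hc' hK hv₀ hμ hKv
end

section
/- Let w₁, w₂ ∈ S_m and set B := N(w₁) ∩ N(w₂). Assume B is pairwise orthogonal. Then either there exists k with (k, k+1) ∈ N(w₁) and (k, k+1) ∉ B, or the number of pairs of the form (k, k+1) in N(w₁) equals the cardinality of B. -/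
/-- The inversion set `N(w) = {(i,j) | i < j, w⁻¹(i) > w⁻¹(j)}` of a permutation,
realizing `Φ⁺(w)` in type `A_{m−1}`. -/
def invSet (m : ℕ) (w : Equiv.Perm (Fin m)) : Finset (Fin m × Fin m) :=
  Finset.univ.filter (fun p => p.1 < p.2 ∧ w⁻¹ p.2 < w⁻¹ p.1)

/-- A pair `(k, k+1)`, corresponding to a simple root. -/
def IsSimplePair {m : ℕ} (p : Fin m × Fin m) : Prop :=
  (p.1 : ℕ) + 1 = (p.2 : ℕ)

instance {m : ℕ} : DecidablePred (IsSimplePair (m := m)) :=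
  fun p => inferInstanceAs (Decidable ((p.1 : ℕ) + 1 = (p.2 : ℕ)))

/-- Orthogonality of the roots `e_i − e_j` and `e_k − e_l`: `{i,j} ∩ {k,l} = ∅`. -/
def OrthPair {m : ℕ} (p q : Fin m × Fin m) : Prop :=
  p.1 ≠ q.1 ∧ p.1 ≠ q.2 ∧ p.2 ≠ q.1 ∧ p.2 ≠ q.2

/-- A set of pairs is pairwise orthogonal. -/
def PairwiseOrth {m : ℕ} (B : Finset (Fin m × Fin m)) : Prop :=
  ∀ p ∈ B, ∀ q ∈ B, p ≠ q → OrthPair p q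

/-!
If every descent `u b < u a` of `u` along a cover `a ⋖ b` is also a descent of `v`, then a common
inversion `(i, j)` of `u` and `v` that shares its first entry and its second entry with no other
common inversion is a cover. Indeed, going up from `i` to `j`, the values of `u` drop below `u i`
at some cover `k ⋖ l` with `u l < u i ≤ u k`, so `v l < v k`. If `v l < v i`, then `(i, l)` is a
common inversion, so `l = j` and hence `v j < v k`; otherwise `v j < v i ≤ v l < v k`. Either way
`(k, j)` is a common inversion, so `k = i`. Now `v l < v i`, and so `l = j` and `i ⋖ j`.
-/

/-- The inversions of an arbitrary function between ordered types; for `u = w⁻¹` these are the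
pairs in `N(w)`. -/
def inversions {ι α : Type*} [LT ι] [LT α] (u : ι → α) : Set (ι × ι) :=
  {p | p.1 < p.2 ∧ u p.2 < u p.1}

theorem exists_covBy_and_not_of_lt {ι : Type*} [PartialOrder ι] [LocallyFiniteOrder ι]
    {P : ι → Prop} {i j : ι} (hij : i < j) (hi : P i) (hj : ¬P j) :
    ∃ k l, i ≤ k ∧ k ⋖ l ∧ l ≤ j ∧ P k ∧ ¬P l := by
  have hfin : {k ∈ Set.Ico i j | P k}.Finite := (Set.finite_Ico i j).sep P
  obtain ⟨k, hik, ⟨⟨-, hkj⟩, hk⟩, hmax⟩ := hfin.exists_le_maximal ⟨Set.left_mem_Ico.2 hij, hi⟩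
  obtain ⟨l, hkl, hlj⟩ := exists_covBy_le_of_lt hkj
  refine ⟨k, l, hik, hkl, hlj, hk, fun hl ↦ ?_⟩
  have hlj' : l < j := hlj.lt_of_ne fun h ↦ hj (h ▸ hl)
  exact hkl.lt.not_ge (hmax ⟨⟨hik.trans hkl.le, hlj'⟩, hl⟩ hkl.le)

section Inversions

variable {ι α β : Type*} [PartialOrder ι] [LocallyFiniteOrder ι] [LinearOrder α] [LinearOrder β]
  {u : ι → α} {v : ι → β}

theorem covBy_of_mem_inversions_inter
    (hfst : (inversions u ∩ inversions v).InjOn Prod.fst)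
    (hsnd : (inversions u ∩ inversions v).InjOn Prod.snd)
    (hcov : ∀ p ∈ inversions u, p.1 ⋖ p.2 → p ∈ inversions v)
    {p : ι × ι} (hp : p ∈ inversions u ∩ inversions v) : p.1 ⋖ p.2 := by
  obtain ⟨i, j⟩ := p
  have ⟨⟨hij, huij⟩, _, hvij⟩ := hp
  obtain ⟨k, l, hik, hkl, hlj, huk, hul⟩ :
      ∃ k l, i ≤ k ∧ k ⋖ l ∧ l ≤ j ∧ u i ≤ u k ∧ u l < u i := by
    simpa only [not_le] using
      exists_covBy_and_not_of_lt (P := fun x ↦ u i ≤ u x) hij le_rfl huij.not_ge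
  have hvkl : v l < v k := (hcov (k, l) ⟨hkl.lt, hul.trans_le huk⟩ hkl).2
  have eq_of_lt (hvl : v l < v i) : l = j :=
    have hil : i < l := hik.trans_lt hkl.lt
    congrArg Prod.snd (hfst (x₁ := (i, l)) ⟨⟨hil, hul⟩, hil, hvl⟩ hp rfl)
  have hvkj : v j < v k := by
    rcases lt_or_ge (v l) (v i) with hvl | hvl
    · exact eq_of_lt hvl ▸ hvkl
    · exact hvij.trans (hvl.trans_lt hvkl)
  have hki : k = i :=
    have hkj : k < j := hkl.lt.trans_le hlj
    congrArg Prod.fst (hsnd (x₁ := (k, j)) ⟨⟨hkj, huij.trans_le huk⟩, hkj, hvkj⟩ hp rfl)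
  subst hki
  exact eq_of_lt hvkl ▸ hkl

theorem simple_outside_or_count_general
    (hfst : (inversions u ∩ inversions v).InjOn Prod.fst)
    (hsnd : (inversions u ∩ inversions v).InjOn Prod.snd) :
    (∃ q ∈ inversions u, q.1 ⋖ q.2 ∧ q ∉ inversions u ∩ inversions v) ∨
      {q ∈ inversions u | q.1 ⋖ q.2} = inversions u ∩ inversions v := by
  refine or_iff_not_imp_left.2 fun hno ↦ ?_
  push Not at hno
  refine Set.Subset.antisymm (fun q hq ↦ hno q hq.1 hq.2) fun q hq ↦ ⟨hq.1, ?_⟩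
  exact covBy_of_mem_inversions_inter hfst hsnd (fun p hp hp' ↦ (hno p hp hp').2) hq

end Inversions

section Fin

variable {m : ℕ}

theorem coe_invSet (w : Equiv.Perm (Fin m)) :
    (invSet m w : Set (Fin m × Fin m)) = inversions ⇑w⁻¹ := by
  simp [invSet, inversions]

theorem isSimplePair_iff_covBy {p : Fin m × Fin m} : IsSimplePair p ↔ p.1 ⋖ p.2 := by
  rw [IsSimplePair, Fin.covBy_iff, Nat.covBy_iff_add_one_eq]

theorem PairwiseOrth.injOn_fst {B : Finset (Fin m × Fin m)} (hB : PairwiseOrth B) :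
    (B : Set (Fin m × Fin m)).InjOn Prod.fst :=
  fun p hp q hq hpq ↦ by_contra fun hne ↦ (hB p hp q hq hne).1 hpq

theorem PairwiseOrth.injOn_snd {B : Finset (Fin m × Fin m)} (hB : PairwiseOrth B) :
    (B : Set (Fin m × Fin m)).InjOn Prod.snd :=
  fun p hp q hq hpq ↦ by_contra fun hne ↦ (hB p hp q hq hne).2.2.2 hpq

end Fin

/-- If `B = N(w₁) ∩ N(w₂)` is pairwise orthogonal, then either `N(w₁)` contains a simple
pair outside `B`, or the number of simple pairs in `N(w₁)` equals `|B|`. -/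
theorem simple_outside_or_count {m : ℕ} (w₁ w₂ : Equiv.Perm (Fin m))
    (B : Finset (Fin m × Fin m)) (hB : B = invSet m w₁ ∩ invSet m w₂)
    (horth : PairwiseOrth B) :
    (∃ q ∈ invSet m w₁, IsSimplePair q ∧ q ∉ B) ∨
      ((invSet m w₁).filter IsSimplePair).card = B.card := by
  have hBset : (B : Set (Fin m × Fin m)) = inversions ⇑w₁⁻¹ ∩ inversions ⇑w₂⁻¹ := by
    rw [hB, Finset.coe_inter, coe_invSet, coe_invSet]
  have hgen := simple_outside_or_count_general (hBset ▸ horth.injOn_fst) (hBset ▸ horth.injOn_snd)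
  rw [← hBset] at hgen
  simp only [← coe_invSet, ← isSimplePair_iff_covBy, Finset.mem_coe] at hgen
  exact hgen.imp_right fun h ↦ congrArg Finset.card (Finset.coe_injective (by simpa using h))
end

section
/- Let w₁, w₂ ∈ S_m and set B := N(w₁) ∩ N(w₂). Assume B is nonempty and pairwise orthogonal. Then there exist u, x, v ∈ S_m with w₁ = u·x·v, |N(w₁)| = |N(u)| + |N(x)| + |N(v)|, |N(x)| = |B|, and B = {(u(i), u(j)) : (i,j) ∈ N(x)}, where moreover u(i) < u(j) for every (i,j) ∈ N(x). (Equivalently: w₁ admits a reduced expression in which the roots of B occur as a consecutive block β_i, …, β_{i+|B|−1}.) -/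
/-!
Read `w⁻¹ i` as the position of the value `i` in the word of `w`. Among the `y` with
`B ⊆ N(y) ⊆ N(w₁)` take one of minimal length: every adjacent descent of its word is then a pair of
`B`, since any other one could be undone. Conversely every `(i, j) ∈ B` is an adjacent descent of
`y`: the first entry `c < j` to the right of `j` is preceded by some `d ≥ j`, and `(c, d) ∈ B`. If
`d = j`, then `c = i` by orthogonality; if `d > j`, comparing the order of `i, j, c, d` in the words
of `y` and `w₂` puts one of `(i, d)`, `(c, j)` in `B`, against orthogonality. So `B` consists of
disjoint adjacent descents of `y`, and undoing them all gives `u`.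
-/

section InversionSets

open Equiv

variable {m : ℕ}

lemma mem_invSet {w : Perm (Fin m)} {p : Fin m × Fin m} :
    p ∈ invSet m w ↔ p.1 < p.2 ∧ w⁻¹ p.2 < w⁻¹ p.1 := by
  simp only [invSet, Finset.mem_filter, Finset.mem_univ, true_and]

lemma image_invSet_inv_mul {u w : Perm (Fin m)} (h : invSet m u ⊆ invSet m w) :
    (invSet m (u⁻¹ * w)).image (Prod.map u u) = invSet m w \ invSet m u := by
  ext ⟨i, j⟩
  obtain ⟨a, rfl⟩ := u.surjective i
  obtain ⟨b, rfl⟩ := u.surjective j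
  rw [← Prod.map_apply, (u.injective.prodMap u.injective).mem_finset_image]
  simp only [Finset.mem_sdiff, mem_invSet, Prod.map_apply, mul_inv_rev, Perm.mul_apply,
    Perm.inv_def, symm_apply_apply, not_and, not_lt]
  constructor
  · rintro ⟨hab, hw⟩
    refine ⟨⟨?_, hw⟩, fun _ => hab.le⟩
    refine (u.injective.ne hab.ne).lt_or_gt.resolve_right fun hba => ?_
    have hmem : (u b, u a) ∈ invSet m u := mem_invSet.2 ⟨hba, by simpa using hab⟩
    exact hw.asymm (mem_invSet.1 (h hmem)).2
  · rintro ⟨⟨hab, hw⟩, hle⟩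
    exact ⟨(hle hab).lt_of_ne fun e => hab.ne (congrArg u e), hw⟩

lemma card_invSet_add_card_invSet_inv_mul {u w : Perm (Fin m)}
    (h : invSet m u ⊆ invSet m w) :
    (invSet m u).card + (invSet m (u⁻¹ * w)).card = (invSet m w).card := by
  rw [← Finset.card_image_of_injective (invSet m (u⁻¹ * w)) (u.injective.prodMap u.injective),
    image_invSet_inv_mul h, add_comm, Finset.card_sdiff_add_card_eq_card h]

/-- The pair `(w (k + 1), w k)` of a right descent `k` of `w`: an inversion whose entries are
adjacent in the word of `w`. The adjacency of the two positions is written as a covering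
relation. -/
def IsDescentPair (w : Perm (Fin m)) (p : Fin m × Fin m) : Prop :=
  p.1 < p.2 ∧ w⁻¹ p.2 ⋖ w⁻¹ p.1

lemma IsDescentPair.mem {w : Perm (Fin m)} {p : Fin m × Fin m} (h : IsDescentPair w p) :
    p ∈ invSet m w :=
  mem_invSet.2 ⟨h.1, h.2.lt⟩

lemma swap_lt_swap_of_covBy {α : Type*} [LinearOrder α] {a b s t : α} (hab : a ⋖ b)
    (hst : s < t) (hne : ¬(s = a ∧ t = b)) : swap a b s < swap a b t := by
  have le_left {c : α} : c < b → c ≤ a := hab.le_of_lt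
  have right_le {c : α} : a < c → b ≤ c := hab.ge_of_gt
  rw [swap_apply_def, swap_apply_def]
  split_ifs <;> grind [hab.lt]

lemma swap_lt_swap_iff_of_covBy {α : Type*} [LinearOrder α] {a b s t : α} (hab : a ⋖ b)
    (hne : ¬(s = a ∧ t = b)) (hne' : ¬(s = b ∧ t = a)) :
    swap a b s < swap a b t ↔ s < t := by
  refine ⟨fun h => ?_, fun h => swap_lt_swap_of_covBy hab h hne⟩
  simpa only [swap_apply_self] using
    swap_lt_swap_of_covBy hab h <| by
      simpa only [swap_apply_eq_iff, swap_apply_left, swap_apply_right] using hne'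

lemma IsDescentPair.invSet_swap_mul {w : Perm (Fin m)} {p : Fin m × Fin m}
    (h : IsDescentPair w p) : invSet m (swap p.1 p.2 * w) = (invSet m w).erase p := by
  obtain ⟨i, j⟩ := p
  obtain ⟨hij, hcov⟩ := h
  ext ⟨a, b⟩
  simp only [Finset.mem_erase, mem_invSet, mul_inv_rev, swap_inv, Perm.mul_apply]
  by_cases hab : (a, b) = (i, j)
  · obtain ⟨rfl, rfl⟩ := Prod.mk.inj hab
    simpa using fun _ => hcov.lt.le
  rw [and_iff_right hab]
  refine and_congr_right fun hlt => ?_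
  rw [swap_comm, w⁻¹.injective.map_swap, w⁻¹.injective.map_swap]
  refine swap_lt_swap_iff_of_covBy hcov ?_ ?_
  · rintro ⟨hb, ha⟩
    exact hab (Prod.ext (w⁻¹.injective ha) (w⁻¹.injective hb))
  · rintro ⟨hb, ha⟩
    rw [w⁻¹.injective ha, w⁻¹.injective hb] at hlt
    exact hlt.asymm hij

lemma IsDescentPair.swap_mul {w : Perm (Fin m)} {p q : Fin m × Fin m} (h : IsDescentPair w q)
    (hpq : OrthPair p q) : IsDescentPair (swap p.1 p.2 * w) q := by
  obtain ⟨h₁₁, h₁₂, h₂₁, h₂₂⟩ := hpq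
  simpa only [IsDescentPair, mul_inv_rev, swap_inv, Perm.mul_apply,
    swap_apply_of_ne_of_ne h₁₁.symm h₂₁.symm, swap_apply_of_ne_of_ne h₁₂.symm h₂₂.symm] using h

lemma PairwiseOrth.exists_invSet_eq_sdiff {B : Finset (Fin m × Fin m)} (horth : PairwiseOrth B)
    (w : Perm (Fin m)) (hdesc : ∀ p ∈ B, IsDescentPair w p) :
    ∃ u : Perm (Fin m), invSet m u = invSet m w \ B := by
  induction B using Finset.induction_on generalizing w with
  | empty => exact ⟨w, Finset.sdiff_empty.symm⟩
  | insert p B hp ih =>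
    simp only [Finset.forall_mem_insert] at hdesc
    have hdesc' : ∀ q ∈ B, IsDescentPair (swap p.1 p.2 * w) q := fun q hq =>
      (hdesc.2 q hq).swap_mul <| horth p (Finset.mem_insert_self p B) q
        (Finset.mem_insert_of_mem hq) (ne_of_mem_of_not_mem hq hp).symm
    have horth' : PairwiseOrth B := fun q hq r hr =>
      horth q (Finset.mem_insert_of_mem hq) r (Finset.mem_insert_of_mem hr)
    obtain ⟨u, hu⟩ := ih horth' _ hdesc'
    refine ⟨u, ?_⟩
    rw [hu, hdesc.1.invSet_swap_mul, Finset.sdiff_insert, Finset.erase_sdiff_comm]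

lemma exists_invSet_between_forall_isDescentPair_mem {w : Perm (Fin m)}
    {B : Finset (Fin m × Fin m)} (hB : B ⊆ invSet m w) :
    ∃ y : Perm (Fin m), B ⊆ invSet m y ∧ invSet m y ⊆ invSet m w ∧
      ∀ p, IsDescentPair y p → p ∈ B := by
  obtain ⟨y, hy, hmin⟩ := Finset.exists_min_image
    (Finset.univ.filter fun y => B ⊆ invSet m y ∧ invSet m y ⊆ invSet m w)
    (fun y => (invSet m y).card) ⟨w, by simpa using hB⟩
  simp only [Finset.mem_filter, Finset.mem_univ, true_and] at hy hmin
  refine ⟨y, hy.1, hy.2, fun p hp => by_contra fun hpB => ?_⟩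
  have hle := hmin (swap p.1 p.2 * y) <| by
    rw [hp.invSet_swap_mul]
    exact ⟨Finset.subset_erase.2 ⟨hy.1, hpB⟩, (Finset.erase_subset _ _).trans hy.2⟩
  rw [hp.invSet_swap_mul] at hle
  exact hle.not_gt (Finset.card_erase_lt_of_mem hp.mem)

lemma PairwiseOrth.snd_unique {B : Finset (Fin m × Fin m)} (horth : PairwiseOrth B)
    {i j k : Fin m} (hj : (i, j) ∈ B) (hk : (i, k) ∈ B) : j = k := by
  by_contra hne
  exact (horth _ hj _ hk (by simpa using hne)).1 rfl

lemma PairwiseOrth.fst_unique {B : Finset (Fin m × Fin m)} (horth : PairwiseOrth B)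
    {i j k : Fin m} (hi : (i, k) ∈ B) (hj : (j, k) ∈ B) : i = j := by
  by_contra hne
  exact (horth _ hi _ hj (by simpa using hne)).2.2.2 rfl

lemma exists_isDescentPair_between {w : Perm (Fin m)} {i j : Fin m} (hij : i < j)
    (hw : w⁻¹ j < w⁻¹ i) :
    ∃ c d, IsDescentPair w (c, d) ∧ c < j ∧ j ≤ d ∧ w⁻¹ j ≤ w⁻¹ d ∧ w⁻¹ c ≤ w⁻¹ i := by
  obtain ⟨k, ⟨hjk, hkj⟩, hmin⟩ := wellFounded_lt.has_min {k | w⁻¹ j < k ∧ w k < j}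
    ⟨w⁻¹ i, hw, by simpa using hij⟩
  have hki : k ≤ w⁻¹ i := not_lt.1 (hmin _ ⟨hw, by simpa using hij⟩)
  obtain ⟨l, hjl, hlk⟩ := exists_le_covBy_of_lt hjk
  have hjd : j ≤ w l := by
    rcases hjl.eq_or_lt with rfl | hjl
    · simp
    · exact not_lt.1 fun hlj => hmin l ⟨hjl, hlj⟩ hlk.lt
  exact ⟨w k, w l, ⟨hkj.trans_le hjd, by simpa using hlk⟩, hkj, hjd, by simpa using hjl,
    by simpa using hki⟩

lemma PairwiseOrth.isDescentPair_of_mem {B : Finset (Fin m × Fin m)} {y w : Perm (Fin m)}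
    (horth : PairwiseOrth B) (hB : B = invSet m y ∩ invSet m w)
    (hdesc : ∀ p, IsDescentPair y p → p ∈ B) {p : Fin m × Fin m} (hp : p ∈ B) :
    IsDescentPair y p := by
  have mem_B {a b : Fin m} : (a, b) ∈ B ↔ a < b ∧ y⁻¹ b < y⁻¹ a ∧ w⁻¹ b < w⁻¹ a := by
    rw [hB, Finset.mem_inter, mem_invSet, mem_invSet, ← and_and_left]
  obtain ⟨i, j⟩ := p
  obtain ⟨hij, hyji, hwji⟩ := mem_B.1 hp
  obtain ⟨c, d, hcd, hcj, hjd, hyjd, hyci⟩ := exists_isDescentPair_between hij hyji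
  have hcdB : (c, d) ∈ B := hdesc _ hcd
  obtain ⟨-, hydc, hwdc⟩ := mem_B.1 hcdB
  suffices hdj : d = j by
    subst hdj
    rwa [horth.fst_unique hp hcdB]
  by_contra hdj
  have hwid : w⁻¹ i ≤ w⁻¹ d := not_lt.1 fun hwdi => hdj <|
    horth.snd_unique (mem_B.2 ⟨hij.trans_le hjd, hydc.trans_le hyci, hwdi⟩) hp
  have hwjc : w⁻¹ j < w⁻¹ c := hwji.trans_le (hwid.trans hwdc.le)
  exact hdj (horth.snd_unique hcdB (mem_B.2 ⟨hcj, hyjd.trans_lt hydc, hwjc⟩))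

end InversionSets

/-- If `B = N(w₁) ∩ N(w₂)` is nonempty and pairwise orthogonal, then `w₁` admits a
reduced expression in which the roots of `B` occur as a consecutive block. -/
theorem consecutive_block {m : ℕ} (w₁ w₂ : Equiv.Perm (Fin m))
    (B : Finset (Fin m × Fin m)) (hB : B = invSet m w₁ ∩ invSet m w₂)
    (hne : B.Nonempty) (horth : PairwiseOrth B) :
    ∃ u x v : Equiv.Perm (Fin m), w₁ = u * x * v ∧
      (invSet m w₁).card = (invSet m u).card + (invSet m x).card + (invSet m v).card ∧
      (invSet m x).card = B.card ∧
      B = (invSet m x).image (fun p => (u p.1, u p.2)) ∧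
      ∀ p ∈ invSet m x, u p.1 < u p.2 := by
  obtain ⟨y, hBy, hyw₁, hdesc⟩ := exists_invSet_between_forall_isDescentPair_mem
    (w := w₁) (hB.trans_subset Finset.inter_subset_left)
  have hBy₂ : B = invSet m y ∩ invSet m w₂ :=
    (Finset.subset_inter hBy (hB.trans_subset Finset.inter_subset_right)).antisymm
      (hB ▸ Finset.inter_subset_inter_right hyw₁)
  obtain ⟨u, hu⟩ := horth.exists_invSet_eq_sdiff y
    fun _ hp => horth.isDescentPair_of_mem hBy₂ hdesc hp
  have huy : invSet m u ⊆ invSet m y := hu.trans_subset Finset.sdiff_subset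
  have himage : B = (invSet m (u⁻¹ * y)).image (Prod.map u u) := by
    rw [image_invSet_inv_mul huy, hu, Finset.sdiff_sdiff_eq_self hBy]
  refine ⟨u, u⁻¹ * y, y⁻¹ * w₁, by group, ?_, ?_, himage, fun p hp => ?_⟩
  · rw [card_invSet_add_card_invSet_inv_mul huy, card_invSet_add_card_invSet_inv_mul hyw₁]
  · rw [himage, Finset.card_image_of_injective _ (u.injective.prodMap u.injective)]
  · have hpB : Prod.map u u p ∈ B := himage ▸ Finset.mem_image_of_mem _ hp
    exact (mem_invSet.1 (hBy hpB)).1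
end
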